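/- If k_0 + k_1 > 0 and a(k_0 − k_1) > 0, then, with d† = √(2a(k_0 − k_1)/(k_0 + k_1)) (which is a positive real number under these hypotheses), f is strictly increasing on (0, d†) and strictly decreasing on (d†, ∞); in particular, for every d_max > 0 the infimum of f over (0, d_max] equals min( f(d_max), inf_{0 < d ≤ min(d†, d_max)} f(d) ), and f attains no interior local minimum on (0, ∞). -/

import Mathlib

/-- The standard Gaussian tail function `Q(x) = ∫_x^∞ (1/√(2π)) e^{-t²/2} dt`. -/
noncomputable def Q (x : ℝ) : ℝ :=
  ∫ t in Set.Ioi x, (1 / Real.sqrt (2 * Real.pi)) * Real.exp (-t ^ 2 / 2)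

/-- The transmitter's (normalized) Bayes risk as a function of the normalized signal
separation `d`, when the receiver applies the likelihood-ratio test with threshold
`τ = eᵃ`: `f(d) = k₀ e^{a/2} Q(a/d + d/2) + k₁ e^{-a/2} Q(d/2 - a/d)`. -/
noncomputable def f (a k0 k1 d : ℝ) : ℝ :=
  k0 * Real.exp (a / 2) * Q (a / d + d / 2) + k1 * Real.exp (-(a / 2)) * Q (d / 2 - a / d)

/-!
In the derivative of `f`, completing the square shows that the two Gaussian densities, weighted by
`e^{±a/2}`, contribute the same positive factor `φ(a/d) e^{-(d/2)²/2}`. Hence the derivative at `d`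
has the sign of `2a(k₀ - k₁) - (k₀ + k₁)d²`, which changes exactly once, from positive to negative,
at `d†`. So `f` has no local minimum on `(0, ∞)`, and on `[d†, dmax]` it is smallest at `dmax`.
-/

open MeasureTheory ProbabilityTheory Set Topology
open scoped NNReal

section OrderLemmas

variable {α β : Type*}

lemma csInf_image_Ioc_eq_min_of_antitoneOn [LinearOrder α] [ConditionallyCompleteLinearOrder β]
    {g : α → β} {l b c : α} (hlb : l < b) (hlc : l < c) (hg : AntitoneOn g (Icc c b))
    (hbdd : BddBelow (g '' Ioc l b)) :
    sInf (g '' Ioc l b) = min (g b) (sInf (g '' Ioc l (min c b))) := by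
  rcases le_total c b with hcb | hbc
  · have hsplit : g '' Ioc l b = g '' Icc c b ∪ g '' Ioc l c := by
      rw [← image_union, union_comm, Ioc_union_Icc_eq_Ioc hlc hcb]
    rw [min_eq_left hcb, hsplit,
      csInf_union (hg.map_isGreatest (isGreatest_Icc hcb)).bddBelow
        ((nonempty_Icc.2 hcb).image g)
        (hbdd.mono (image_mono (Ioc_subset_Ioc_right hcb))) ((nonempty_Ioc.2 hlc).image g),
      hg.sInf_image_Icc hcb]
  · rw [min_eq_right hbc, min_eq_right]
    exact csInf_le hbdd (mem_image_of_mem g (right_mem_Ioc.2 hlb))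

variable [TopologicalSpace α] [Preorder α] [Preorder β] {g : α → β} {s : Set α} {x : α}

lemma not_isLocalMin_of_strictMonoOn [(𝓝[<] x).NeBot] (hg : StrictMonoOn g s)
    (hs : s ∈ 𝓝[≤] x) : ¬ IsLocalMin g x := by
  intro hmin
  have hxs : x ∈ s := mem_of_mem_nhdsWithin self_mem_Iic hs
  have hs_left : s ∈ 𝓝[<] x := nhdsWithin_mono x Iio_subset_Iic_self hs
  have hmin_left : ∀ᶠ y in 𝓝[<] x, g x ≤ g y := hmin.filter_mono nhdsWithin_le_nhds
  obtain ⟨y, ⟨hxy, hys⟩, hyx⟩ := ((hmin_left.and hs_left).and self_mem_nhdsWithin).exists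
  exact (hg hys hxs hyx).not_ge hxy

lemma not_isLocalMin_of_strictAntiOn [(𝓝[>] x).NeBot] (hg : StrictAntiOn g s)
    (hs : s ∈ 𝓝[≥] x) : ¬ IsLocalMin g x :=
  not_isLocalMin_of_strictMonoOn (α := αᵒᵈ) (x := OrderDual.toDual x) hg.dual_left hs

end OrderLemmas

lemma hasDerivAt_integral_Ioi {E : Type*} [NormedAddCommGroup E] [NormedSpace ℝ E]
    [CompleteSpace E] {g : ℝ → E} {x : ℝ} (hint : Integrable g) (hg : ContinuousAt g x) :
    HasDerivAt (fun y ↦ ∫ t in Ioi y, g t) (-g x) x := by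
  have htail : (fun y ↦ ∫ t in Ioi y, g t) =
      fun y ↦ (∫ t in Ioi x, g t) - ∫ t in x..y, g t := by
    funext y
    exact eq_sub_of_add_eq'
      (intervalIntegral.integral_interval_add_Ioi hint.integrableOn hint.integrableOn)
  rw [htail]
  exact (intervalIntegral.integral_hasDerivAt_right hint.intervalIntegrable
    hint.aestronglyMeasurable.stronglyMeasurableAtFilter hg).const_sub _

section GaussianDensity

lemma continuous_gaussianPDFReal (μ : ℝ) (v : ℝ≥0) : Continuous (gaussianPDFReal μ v) := by
  rw [gaussianPDFReal_def]
  fun_prop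

lemma gaussianPDFReal_zero_neg (v : ℝ≥0) (x : ℝ) :
    gaussianPDFReal 0 v (-x) = gaussianPDFReal 0 v x := by
  simp only [gaussianPDFReal, sub_zero, neg_sq]

lemma exp_mul_gaussianPDFReal_add (μ : ℝ) (v : ℝ≥0) (x y : ℝ) :
    Real.exp ((x - μ) * y / v) * gaussianPDFReal μ v (x + y) =
      gaussianPDFReal μ v x * Real.exp (-y ^ 2 / (2 * v)) := by
  simp only [gaussianPDFReal]
  rw [mul_left_comm, mul_assoc _ (Real.exp _), ← Real.exp_add, ← Real.exp_add]
  congr 2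
  ring

end GaussianDensity

section GaussianTail

lemma Q_eq_integral_gaussianPDFReal (x : ℝ) : Q x = ∫ t in Ioi x, gaussianPDFReal 0 1 t := by
  simp [Q, gaussianPDFReal]

lemma hasDerivAt_Q (x : ℝ) : HasDerivAt Q (-gaussianPDFReal 0 1 x) x := by
  rw [funext Q_eq_integral_gaussianPDFReal]
  exact hasDerivAt_integral_Ioi (integrable_gaussianPDFReal 0 1)
    (continuous_gaussianPDFReal 0 1).continuousAt

lemma abs_Q_le_one (x : ℝ) : |Q x| ≤ 1 := by
  have hnonneg : ∀ t, 0 ≤ gaussianPDFReal 0 1 t := gaussianPDFReal_nonneg 0 1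
  rw [Q_eq_integral_gaussianPDFReal, abs_of_nonneg (integral_nonneg hnonneg),
    ← integral_gaussianPDFReal_eq_one 0 one_ne_zero]
  exact setIntegral_le_integral (integrable_gaussianPDFReal 0 1) (ae_of_all _ hnonneg)

end GaussianTail

section BayesRisk

variable {a k0 k1 d : ℝ}

lemma bddBelow_range_f (a k0 k1 : ℝ) : BddBelow (range (f a k0 k1)) := by
  have hterm (c x : ℝ) : -|c| ≤ c * Q x := by
    refine neg_le_of_abs_le ?_
    rw [abs_mul]
    exact mul_le_of_le_one_right (abs_nonneg c) (abs_Q_le_one x)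
  refine ⟨-|k0 * Real.exp (a / 2)| + -|k1 * Real.exp (-(a / 2))|, ?_⟩
  rintro _ ⟨d, rfl⟩
  exact add_le_add (hterm _ _) (hterm _ _)

lemma exp_half_mul_gaussianPDFReal (a : ℝ) (hd : d ≠ 0) :
    Real.exp (a / 2) * gaussianPDFReal 0 1 (a / d + d / 2) =
      gaussianPDFReal 0 1 (a / d) * Real.exp (-(d / 2) ^ 2 / 2) := by
  have hprod : a / d * (d / 2) = a / 2 := by field_simp
  simpa [hprod] using exp_mul_gaussianPDFReal_add 0 1 (a / d) (d / 2)

lemma exp_neg_half_mul_gaussianPDFReal (a : ℝ) (hd : d ≠ 0) :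
    Real.exp (-(a / 2)) * gaussianPDFReal 0 1 (d / 2 - a / d) =
      gaussianPDFReal 0 1 (a / d) * Real.exp (-(d / 2) ^ 2 / 2) := by
  rw [← neg_div, ← gaussianPDFReal_zero_neg 1 (a / d), ← neg_div, sub_eq_neg_add, ← neg_div]
  exact exp_half_mul_gaussianPDFReal (-a) hd

lemma hasDerivAt_f (a k0 k1 : ℝ) (hd : d ≠ 0) :
    HasDerivAt (f a k0 k1)
      (gaussianPDFReal 0 1 (a / d) * Real.exp (-(d / 2) ^ 2 / 2) / (2 * d ^ 2) *
        (2 * a * (k0 - k1) - (k0 + k1) * d ^ 2)) d := by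
  have hinv : HasDerivAt (fun x ↦ a / x) (-(a / d ^ 2)) d := by
    simpa [div_eq_mul_inv] using (hasDerivAt_inv hd).const_mul a
  have hhalf : HasDerivAt (fun x : ℝ ↦ x / 2) (1 / 2) d := (hasDerivAt_id d).div_const 2
  have hterm0 := ((hasDerivAt_Q (a / d + d / 2)).comp d (hinv.add hhalf)).const_mul
    (k0 * Real.exp (a / 2))
  have hterm1 := ((hasDerivAt_Q (d / 2 - a / d)).comp d (hhalf.sub hinv)).const_mul
    (k1 * Real.exp (-(a / 2)))
  refine (hterm0.add hterm1).congr_deriv ?_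
  calc
    _ = k0 * (Real.exp (a / 2) * gaussianPDFReal 0 1 (a / d + d / 2)) * (a / d ^ 2 - 1 / 2) -
        k1 * (Real.exp (-(a / 2)) * gaussianPDFReal 0 1 (d / 2 - a / d)) *
          (1 / 2 + a / d ^ 2) := by ring
    _ = _ := by
      rw [exp_half_mul_gaussianPDFReal a hd, exp_neg_half_mul_gaussianPDFReal a hd]
      field_simp
      ring

lemma continuousOn_f (a k0 k1 : ℝ) : ContinuousOn (f a k0 k1) (Ioi 0) :=
  fun _ hd ↦ (hasDerivAt_f a k0 k1 (ne_of_gt hd)).continuousAt.continuousWithinAt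

/-- The separation `d† = √(2a(k₀ - k₁)/(k₀ + k₁))` at which the Bayes risk `f a k0 k1`
peaks when `k₀ + k₁` and `a(k₀ - k₁)` are positive; it is `0` if the radicand is negative or
`k₀ + k₁ = 0`. -/
noncomputable def criticalSeparation (a k0 k1 : ℝ) : ℝ :=
  Real.sqrt (2 * a * (k0 - k1) / (k0 + k1))

lemma criticalSeparation_pos (hsum : 0 < k0 + k1) (hdiff : 0 < a * (k0 - k1)) :
    0 < criticalSeparation a k0 k1 :=
  Real.sqrt_pos.2 (div_pos (by linarith) hsum)

lemma deriv_f_pos (hsum : 0 < k0 + k1) (hd : 0 < d) (hlt : d < criticalSeparation a k0 k1) :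
    0 < deriv (f a k0 k1) d := by
  have hsq : d ^ 2 * (k0 + k1) < 2 * a * (k0 - k1) :=
    (lt_div_iff₀ hsum).1 ((Real.lt_sqrt hd.le).1 hlt)
  have hdensity := gaussianPDFReal_pos 0 1 (a / d) one_ne_zero
  rw [(hasDerivAt_f a k0 k1 hd.ne').deriv]
  exact mul_pos (by positivity) (by linarith)

lemma deriv_f_neg (hsum : 0 < k0 + k1) (hd : 0 < d) (hlt : criticalSeparation a k0 k1 < d) :
    deriv (f a k0 k1) d < 0 := by
  have hsq : 2 * a * (k0 - k1) < d ^ 2 * (k0 + k1) :=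
    (div_lt_iff₀ hsum).1 ((Real.sqrt_lt' hd).1 hlt)
  have hdensity := gaussianPDFReal_pos 0 1 (a / d) one_ne_zero
  rw [(hasDerivAt_f a k0 k1 hd.ne').deriv]
  exact mul_neg_of_pos_of_neg (by positivity) (by linarith)

lemma strictMonoOn_f (hsum : 0 < k0 + k1) :
    StrictMonoOn (f a k0 k1) (Ioc 0 (criticalSeparation a k0 k1)) := by
  refine strictMonoOn_of_deriv_pos (convex_Ioc _ _)
    ((continuousOn_f a k0 k1).mono Ioc_subset_Ioi_self) fun d hd ↦ ?_
  rw [interior_Ioc] at hd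
  exact deriv_f_pos hsum hd.1 hd.2

lemma strictAntiOn_f (hsum : 0 < k0 + k1) (hdiff : 0 < a * (k0 - k1)) :
    StrictAntiOn (f a k0 k1) (Ici (criticalSeparation a k0 k1)) := by
  have hpos := criticalSeparation_pos hsum hdiff
  refine strictAntiOn_of_deriv_neg (convex_Ici _)
    ((continuousOn_f a k0 k1).mono (Ici_subset_Ioi.2 hpos)) fun d hd ↦ ?_
  rw [interior_Ici] at hd
  exact deriv_f_neg hsum (hpos.trans hd) hd

lemma not_isLocalMin_f (hsum : 0 < k0 + k1) (hdiff : 0 < a * (k0 - k1)) (hd : 0 < d) :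
    ¬ IsLocalMin (f a k0 k1) d := by
  rcases le_total d (criticalSeparation a k0 k1) with hle | hge
  · exact not_isLocalMin_of_strictMonoOn ((strictMonoOn_f hsum).mono (Ioc_subset_Ioc_right hle))
      (Ioc_mem_nhdsLE hd)
  · exact not_isLocalMin_of_strictAntiOn ((strictAntiOn_f hsum hdiff).mono (Ici_subset_Ici.2 hge))
      self_mem_nhdsWithin

end BayesRisk

/-- If `k₀ + k₁ > 0` and `a(k₀ - k₁) > 0`, then with `d† = √(2a(k₀-k₁)/(k₀+k₁))`
(positive under these hypotheses), `f` is strictly increasing on `(0, d†)` and strictly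
decreasing on `(d†, ∞)`; in particular, for every `d_max > 0` the infimum of `f` over
`(0, d_max]` equals `min(f(d_max), inf_{0 < d ≤ min(d†, d_max)} f(d))`, and `f` attains
no interior local minimum on `(0, ∞)`. -/
theorem stmt_11 (a k0 k1 : ℝ) (hsum : 0 < k0 + k1) (hdiff : 0 < a * (k0 - k1)) :
    0 < Real.sqrt (2 * a * (k0 - k1) / (k0 + k1))
      ∧ StrictMonoOn (f a k0 k1) (Set.Ioo 0 (Real.sqrt (2 * a * (k0 - k1) / (k0 + k1))))
      ∧ StrictAntiOn (f a k0 k1) (Set.Ioi (Real.sqrt (2 * a * (k0 - k1) / (k0 + k1))))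
      ∧ (∀ dmax : ℝ, 0 < dmax →
          sInf (f a k0 k1 '' Set.Ioc 0 dmax)
            = min (f a k0 k1 dmax)
                (sInf (f a k0 k1 ''
                  Set.Ioc 0 (min (Real.sqrt (2 * a * (k0 - k1) / (k0 + k1))) dmax))))
      ∧ ¬ ∃ d : ℝ, 0 < d ∧ IsLocalMin (f a k0 k1) d := by
  have hpos := criticalSeparation_pos hsum hdiff
  have hanti := strictAntiOn_f hsum hdiff
  refine ⟨hpos, (strictMonoOn_f hsum).mono Ioo_subset_Ioc_self,
    hanti.mono Ioi_subset_Ici_self, fun dmax hdmax ↦ ?_, ?_⟩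
  · exact csInf_image_Ioc_eq_min_of_antitoneOn hdmax hpos
      (hanti.antitoneOn.mono Icc_subset_Ici_self)
      ((bddBelow_range_f a k0 k1).mono (image_subset_range _ _))
  · rintro ⟨d, hd, hmin⟩
    exact not_isLocalMin_f hsum hdiff hd hmin
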